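/- arXiv:0807.0916 — 2 statements merged into one kernel-verified Lean document; each statement's English description precedes it below -/
import Mathlib

section
/- Let b = 2l+1 be an odd integer with l ≥ 1, and let r1, r2, r3 be the permutations of {1, 2, …, b} defined by: r1(i) = b − i for 1 ≤ i ≤ b−1 and r1(b) = b; r2(1) = 1, r2(b) = b, and r2(i) = b+1−i for 2 ≤ i ≤ b−1; r3(i) = b+1−i for all 1 ≤ i ≤ b. Then the symmetric group Sym_b on {1, …, b} is generated by r1, r2 and r3. -/
/-!
The product `r3 * r1` is the `b`-cycle `(1, 2, …, b)` and `r2 * r3` is the transposition `(1, b)`,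
whose two points are adjacent on that cycle. A full cycle together with a transposition of two
adjacent points generates the symmetric group.
-/

open Equiv Equiv.Perm

theorem closure_finRotate_swap_zero_last (n : ℕ) :
    Subgroup.closure {finRotate (n + 1), swap 0 (Fin.last n)} = ⊤ := by
  obtain rfl | hn := Nat.eq_zero_or_pos n
  · exact Subsingleton.elim (α := Subgroup (Perm (Fin 1))) _ _
  · have isCycle : (finRotate (n + 1)).IsCycle := isCycle_finRotate_of_le (by omega)
    have support_eq : (finRotate (n + 1)).support = Finset.univ :=
      support_finRotate_of_le (by omega)
    simpa only [finRotate_last, swap_comm (Fin.last n)] using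
      closure_cycle_adjacent_swap isCycle support_eq (Fin.last n)

theorem closure_mul_mul_self_eq_top {G : Type*} [Group G] {c s : G}
    (h : Subgroup.closure {c, s} = ⊤) (t : G) :
    Subgroup.closure {t * c, s * t, t} = ⊤ := by
  set H := Subgroup.closure {t * c, s * t, t}
  have t_mem : t ∈ H := Subgroup.subset_closure (by simp)
  have c_mem : c ∈ H := (H.mul_mem_cancel_left t_mem).1 (Subgroup.subset_closure (by simp))
  have s_mem : s ∈ H := (H.mul_mem_cancel_right t_mem).1 (Subgroup.subset_closure (by simp))
  rw [eq_top_iff, ← h, Subgroup.closure_le]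
  exact Set.pair_subset c_mem s_mem

theorem eq_revPerm_mul_finRotate {n : ℕ} {r : Perm (Fin (n + 1))}
    (h_castSucc : ∀ i : Fin n, r i.castSucc = i.rev.castSucc)
    (h_last : r (Fin.last n) = Fin.last n) :
    r = Fin.revPerm * finRotate (n + 1) := by
  refine Equiv.ext fun i => ?_
  cases i using Fin.lastCases with
  | last => simp [h_last]
  | cast i => simp [h_castSucc, Fin.rev_succ]

theorem eq_swap_zero_last_mul_revPerm {n : ℕ} {r : Perm (Fin (n + 1))}
    (h_zero : r 0 = 0) (h_last : r (Fin.last n) = Fin.last n)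
    (h_rev : ∀ i, i ≠ 0 → i ≠ Fin.last n → r i = i.rev) :
    r = swap 0 (Fin.last n) * Fin.revPerm := by
  refine Equiv.ext fun i => ?_
  rw [Perm.mul_apply, Fin.revPerm_apply]
  obtain rfl | i_ne_zero := eq_or_ne i 0
  · simp [h_zero]
  obtain rfl | i_ne_last := eq_or_ne i (Fin.last n)
  · simp [h_last]
  have rev_ne_zero : i.rev ≠ 0 := by simpa [Fin.rev_eq_iff] using i_ne_last
  have rev_ne_last : i.rev ≠ Fin.last n := by simpa [Fin.rev_eq_iff] using i_ne_zero
  rw [h_rev i i_ne_zero i_ne_last, swap_apply_of_ne_of_ne rev_ne_zero rev_ne_last]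

theorem stmt_1_general (b : ℕ) (r1 r2 r3 : Perm (Fin b))
    (hr1 : ∀ i : Fin b,
      ((i : ℕ) + 1 ≤ b - 1 → ((r1 i : ℕ) + 1 = b - ((i : ℕ) + 1))) ∧
      ((i : ℕ) + 1 = b → r1 i = i))
    (hr2 : ∀ i : Fin b,
      (((i : ℕ) + 1 = 1 ∨ (i : ℕ) + 1 = b) → r2 i = i) ∧
      (2 ≤ (i : ℕ) + 1 → (i : ℕ) + 1 ≤ b - 1 →
        ((r2 i : ℕ) + 1 = b + 1 - ((i : ℕ) + 1))))
    (hr3 : ∀ i : Fin b, (r3 i : ℕ) + 1 = b + 1 - ((i : ℕ) + 1)) :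
    Subgroup.closure {r1, r2, r3} = (⊤ : Subgroup (Perm (Fin b))) := by
  obtain _ | n := b
  · exact Subsingleton.elim _ _
  have r1_eq : r1 = Fin.revPerm * finRotate (n + 1) := by
    refine eq_revPerm_mul_finRotate (fun i => Fin.ext ?_) ((hr1 _).2 (by simp))
    have := (hr1 i.castSucc).1 (by simp)
    simp only [Fin.val_castSucc, Fin.val_rev] at this ⊢
    omega
  have r2_eq : r2 = swap 0 (Fin.last n) * Fin.revPerm := by
    refine eq_swap_zero_last_mul_revPerm ((hr2 _).1 (by simp)) ((hr2 _).1 (by simp))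
      fun i i_ne_zero i_ne_last => Fin.ext ?_
    have i_pos : 0 < (i : ℕ) := Fin.pos_iff_ne_zero.2 i_ne_zero
    have i_lt : (i : ℕ) < n := Fin.val_lt_last i_ne_last
    have := (hr2 i).2 (by omega) (by omega)
    rw [Fin.val_rev]
    omega
  have r3_eq : r3 = Fin.revPerm := by
    refine Equiv.ext fun i => Fin.ext ?_
    have := hr3 i
    rw [Fin.revPerm_apply, Fin.val_rev]
    omega
  rw [r1_eq, r2_eq, r3_eq]
  exact closure_mul_mul_self_eq_top (closure_finRotate_swap_zero_last n) Fin.revPerm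

/-- For odd `b = 2l+1` with `l ≥ 1`, the symmetric group on `{1, …, b}`
(realized as `Fin b`, where `i : Fin b` represents the point `i + 1`) is
generated by the three involutions
`r1 = (1, b−1)(2, b−2)⋯(l, l+1)`, `r2 = (2, b−1)(3, b−2)⋯(l, l+2)` and
`r3 = (1, b)(2, b−1)⋯(l, l+2)`. -/
theorem stmt_1 (l b : ℕ) (hl : 1 ≤ l) (hb : b = 2 * l + 1)
    (r1 r2 r3 : Equiv.Perm (Fin b))
    -- r1 sends the point labelled `k` (i.e. `k = i + 1`) to `b - k` for
    -- `1 ≤ k ≤ b - 1`, and fixes the point labelled `b`: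
    (hr1 : ∀ i : Fin b,
      ((i : ℕ) + 1 ≤ b - 1 → ((r1 i : ℕ) + 1 = b - ((i : ℕ) + 1))) ∧
      ((i : ℕ) + 1 = b → r1 i = i))
    -- r2 fixes the points labelled `1` and `b`, and sends the point
    -- labelled `k` to `b + 1 - k` for `2 ≤ k ≤ b - 1`:
    (hr2 : ∀ i : Fin b,
      (((i : ℕ) + 1 = 1 ∨ (i : ℕ) + 1 = b) → r2 i = i) ∧
      (2 ≤ (i : ℕ) + 1 → (i : ℕ) + 1 ≤ b - 1 →
        ((r2 i : ℕ) + 1 = b + 1 - ((i : ℕ) + 1))))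
    -- r3 sends the point labelled `k` to `b + 1 - k` for all `1 ≤ k ≤ b`:
    (hr3 : ∀ i : Fin b, (r3 i : ℕ) + 1 = b + 1 - ((i : ℕ) + 1)) :
    Subgroup.closure {r1, r2, r3} = (⊤ : Subgroup (Equiv.Perm (Fin b))) :=
  stmt_1_general b r1 r2 r3 hr1 hr2 hr3
end

section
/- For every integer n ≥ 2, the symmetric group Sym_n on n letters can be generated by three elements each of which has order dividing 2 (i.e., by three involutions, where the identity is permitted). -/
/-!
The rotation `x ↦ x + 1` of `ℤ/n` is the composite of the two reflections `x ↦ -x` and `x ↦ 1 - x`.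
It is an `n`-cycle, and a full cycle together with a transposition of two consecutive points
generates the symmetric group.
-/

open Equiv Equiv.Perm

theorem perm_sq_eq_one_iff_involutive {α : Type*} {σ : Perm α} :
    σ ^ 2 = 1 ↔ Function.Involutive σ := by
  simp only [Equiv.ext_iff, sq, Perm.mul_apply, Perm.one_apply, Function.Involutive]

theorem subLeft_mul_subLeft {A : Type*} [AddCommGroup A] (a b : A) :
    (Equiv.subLeft a * Equiv.subLeft b : Perm A) = Equiv.addRight (a - b) := by
  ext x
  simp only [Perm.mul_apply, Equiv.subLeft_apply, Equiv.coe_addRight]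
  abel

theorem finRotate_eq_addRight_one (n : ℕ) [NeZero n] : finRotate n = Equiv.addRight 1 :=
  Equiv.ext finRotate_apply

theorem finRotate_eq_subLeft_one_mul_subLeft_zero (n : ℕ) [NeZero n] :
    finRotate n = Equiv.subLeft 1 * Equiv.subLeft 0 := by
  rw [subLeft_mul_subLeft, sub_zero, finRotate_eq_addRight_one]

theorem closure_factors_adjacent_swap_eq_top {α : Type*} [Fintype α] [DecidableEq α]
    {σ s t : Perm α} (hσ : σ.IsCycle) (hsupp : σ.support = Finset.univ) (hst : σ = s * t) (x : α) :
    Subgroup.closure {s, t, swap x (σ x)} = ⊤ := by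
  set H := Subgroup.closure {s, t, swap x (σ x)}
  have s_mem : s ∈ H := Subgroup.subset_closure (by simp)
  have t_mem : t ∈ H := Subgroup.subset_closure (by simp)
  have swap_mem : swap x (σ x) ∈ H := Subgroup.subset_closure (by simp)
  have cycle_mem : σ ∈ H := hst ▸ mul_mem s_mem t_mem
  rw [eq_top_iff, ← closure_cycle_adjacent_swap hσ hsupp x, Subgroup.closure_le]
  exact Set.pair_subset cycle_mem swap_mem

/-- For every `n ≥ 2`, the symmetric group on `n` letters is generated by
three elements each of order dividing 2 (three involutions, the identity
being permitted). -/
theorem stmt_8 (n : ℕ) (hn : 2 ≤ n) :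
    ∃ s₁ s₂ s₃ : Equiv.Perm (Fin n),
      s₁ ^ 2 = 1 ∧ s₂ ^ 2 = 1 ∧ s₃ ^ 2 = 1 ∧
      Subgroup.closure {s₁, s₂, s₃} = ⊤ := by
  have : NeZero n := ⟨by lia⟩
  have subLeft_sq (a : Fin n) : (Equiv.subLeft a : Perm (Fin n)) ^ 2 = 1 :=
    perm_sq_eq_one_iff_involutive.mpr (Equiv.subLeft_involutive a)
  have swap_sq : swap 0 (finRotate n 0) ^ 2 = 1 := by rw [sq, swap_mul_self]
  exact ⟨Equiv.subLeft 1, Equiv.subLeft 0, swap 0 (finRotate n 0),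
    subLeft_sq 1, subLeft_sq 0, swap_sq,
    closure_factors_adjacent_swap_eq_top (isCycle_finRotate_of_le hn) (support_finRotate_of_le hn)
      (finRotate_eq_subLeft_one_mul_subLeft_zero n) 0⟩
end
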